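/- Let X ⊆ A^ℤ be a subshift that has only finitely many σ±-chain components and that admits a finite factor with nontrivial dynamics: there exist a finite set Y with a map g : Y → Y, g ≠ id_Y, and a continuous surjection π : X → Y with π ∘ σ = g ∘ π. Then X is not the generic limit set of any cellular automaton on A^ℤ. -/

import Mathlib

open Filter Set Function

namespace Gls

variable {A : Type*}

/-- The left shift map on `A^ℤ`. -/
def shift (x : ℤ → A) : ℤ → A := fun i => x (i + 1)

/-- A cellular automaton: a continuous shift-commuting self-map of the full shift. -/
def IsCA [TopologicalSpace A] (f : (ℤ → A) → (ℤ → A)) : Prop :=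
  Continuous f ∧ f ∘ shift = shift ∘ f

/-- The set of limit points of the forward orbit of `x` under `f`. -/
def omegaSet [TopologicalSpace A] (f : (ℤ → A) → (ℤ → A)) (x : ℤ → A) : Set (ℤ → A) :=
  {y | MapClusterPt y atTop fun t => f^[t] x}

/-- The realm of attraction of `Y`. -/
def realm [TopologicalSpace A] (f : (ℤ → A) → (ℤ → A)) (Y : Set (ℤ → A)) : Set (ℤ → A) :=
  {x | omegaSet f x ⊆ Y}

/-- The generic limit set: the intersection of all closed sets whose realm is comeager. -/
def genLimitSet [TopologicalSpace A] (f : (ℤ → A) → (ℤ → A)) : Set (ℤ → A) :=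
  ⋂₀ {C | IsClosed C ∧ realm f C ∈ residual (ℤ → A)}

/-- The word `x_{[i, i+n)}` of length `n` read in the configuration `x` from position `i`. -/
def word (x : ℤ → A) (i : ℤ) (n : ℕ) : List A :=
  (List.range n).map fun k => x (i + k)

/-- The cylinder set `[w]_i`. -/
def cylinder (w : List A) (i : ℤ) : Set (ℤ → A) := {x | word x i w.length = w}

/-- The language of `X`: all finite words occurring in points of `X`. -/
def lang (X : Set (ℤ → A)) : Set (List A) :=
  {w | ∃ x ∈ X, ∃ i : ℤ, word x i w.length = w}


/-- A subshift: a closed shift-invariant set. -/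
def IsSubshift {A : Type*} [TopologicalSpace A] (X : Set (ℤ → A)) : Prop :=
  IsClosed X ∧ shift '' X = X

/-- The chain relation: `u ∼ v` iff they have the same length `n` and there are `x ∈ X`
and `k ≥ 0` with `x_{[0,n)} = u` and `x_{[k,k+n)} = v`. -/
def chainRel {A : Type*} (X : Set (ℤ → A)) (u v : List A) : Prop :=
  u.length = v.length ∧ ∃ x ∈ X, ∃ k : ℕ,
    word x 0 u.length = u ∧ word x (k : ℤ) u.length = v

/-- `X` is `σ±`-chain transitive if for every `n`, the symmetric-transitive closure of the
width-`n` chain relation relates every pair of words in `L_n(X)`. -/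
def ChainTransPM {A : Type*} (X : Set (ℤ → A)) : Prop :=
  ∀ u ∈ lang X, ∀ v ∈ lang X, u.length = v.length → Relation.EqvGen (chainRel X) u v

/-- `Y` is a `σ±`-chain component of `X`: a maximal `σ±`-chain transitive subshift
contained in `X`. -/
def IsChainComponent {A : Type*} [TopologicalSpace A] (X Y : Set (ℤ → A)) : Prop :=
  IsSubshift Y ∧ Y ⊆ X ∧ ChainTransPM Y ∧
    ∀ Z : Set (ℤ → A), IsSubshift Z → Z ⊆ X → ChainTransPM Z → Y ⊆ Z → Z = Y

/-- The restriction of the shift map to a shift-invariant set `X`. -/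
def shiftRes {A : Type*} (X : Set (ℤ → A)) (h : shift '' X = X) : X → X :=
  fun x => ⟨shift x.val, h.subset (Set.mem_image_of_mem shift x.prop)⟩

/-!
Suppose `X` is the generic limit set of `f`. Since `π ∘ σ = g ∘ π` and `π` is onto, `g` is a
permutation of the finite set `Y`, and `σ` acts through `g` on the `f`-itineraries
`t ↦ π (f^t x)`. On a `σ±`-chain component every locally constant `σ`-invariant map is constant;
applied to the orbits of finitely many coordinates of the itinerary under all permutations of `Y`,
this shows that any two itineraries over a component differ by a permutation of `Y`. With finitely
many components there are only finitely many itineraries, so the itinerary is a locally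
constant function `p` on `X`, and its value at `f x` is determined by its value at `x`.

Generic orbits eventually stay near `X`, where this determinism holds, so by Baire all orbits
starting near a generic point `z` eventually show the same values of `p` as that of `z`. For all
large `k` some generic `y` and its shift `σ^k y` both start near `z`; as `σ^k` acts on `p` through
`g^k`, both `g^k` and `g^(k+1)` fix these values. Hence `g` fixes `p` on `X`, and `g = id`.
-/

section Topology

open scoped Topology

variable {ι α β : Type*}

theorem mem_nhds_pi_iff_of_discrete {E : ι → Type*} [∀ i, TopologicalSpace (E i)]
    [∀ i, DiscreteTopology (E i)] {x : ∀ i, E i} {U : Set (∀ i, E i)} :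
    U ∈ 𝓝 x ↔ ∃ I : Finset ι, {y | ∀ i ∈ I, y i = x i} ⊆ U := by
  rw [nhds_pi, Filter.mem_pi']
  constructor
  · rintro ⟨I, t, ht, htU⟩
    exact ⟨I, fun y hy => htU fun i hi => hy i hi ▸ mem_of_mem_nhds (ht i)⟩
  · rintro ⟨I, hI⟩
    exact ⟨I, fun i => {x i}, fun i => (isOpen_discrete _).mem_nhds rfl, hI⟩

theorem exists_finset_dependsOn_of_isLocallyConstant {E : ι → Type*} [∀ i, TopologicalSpace (E i)]
    [∀ i, DiscreteTopology (E i)] [∀ i, Finite (E i)] {p : (∀ i, E i) → β}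
    (hp : IsLocallyConstant p) : ∃ I : Finset ι, DependsOn p I := by
  classical
  choose I hI using fun x => mem_nhds_pi_iff_of_discrete.1 ((hp.isOpen_fiber (p x)).mem_nhds rfl)
  obtain ⟨t, ht⟩ := CompactSpace.elim_nhds_subcover (fun x => {y | ∀ i ∈ I x, y i = x i})
    fun x => mem_nhds_pi_iff_of_discrete.2 ⟨I x, Subset.rfl⟩
  refine ⟨t.biUnion I, fun y z hyz => ?_⟩
  obtain ⟨x, hxt, hy⟩ := mem_iUnion₂.1 (ht.ge (mem_univ y))
  have hz : ∀ i ∈ I x, z i = x i := fun i hi =>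
    (hyz i (Finset.mem_biUnion.2 ⟨x, hxt, hi⟩)).symm.trans (hy i hi)
  exact (hI x hy).trans (hI x hz).symm

theorem exists_isLocallyConstant_extension [TopologicalSpace α] [CompactSpace α] [T2Space α]
    [TotallyDisconnectedSpace α] [TopologicalSpace β] [T1Space β] [Nonempty β] {X : Set α}
    (hX : IsClosed X) {s : X → β} (hs : Continuous s) (hfin : (range s).Finite) :
    ∃ p : α → β, IsLocallyConstant p ∧ ∀ x : X, p x = s x := by
  rcases isEmpty_or_nonempty X with _ | _
  · exact ⟨fun _ => Classical.arbitrary β, IsLocallyConstant.const _, isEmptyElim⟩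
  have := isCompact_iff_compactSpace.1 hX.isCompact
  have := hfin.to_subtype
  obtain ⟨k, hk, -, hks⟩ := Profinite.exists_lift_of_finite_of_injective_of_surjective
    (Subtype.val : X → α) continuous_subtype_val Subtype.val_injective
    (fun _ : range s => ()) (fun _ => range_nonempty s |>.to_subtype.elim fun c => ⟨c, rfl⟩)
    (rangeFactorization s) (hs.subtype_mk _) (fun _ => ()) continuous_const rfl
  exact ⟨fun x => k x, ((IsLocallyConstant.iff_continuous k).2 hk).comp Subtype.val,
    fun x => congrArg Subtype.val (congrFun hks x)⟩

theorem eventually_residual_eventually_nhds_forall_ge [TopologicalSpace α] [BaireSpace α]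
    [TopologicalSpace β] {u : ℕ → α → β} (hu : ∀ t, Continuous (u t)) {W : Set β}
    (hW : IsClosed W) (h : ∀ᶠ x in residual α, ∀ᶠ t in atTop, u t x ∈ W) :
    ∀ᶠ x in residual α, ∃ T, ∀ᶠ y in 𝓝 x, ∀ t ≥ T, u t y ∈ W := by
  let E (T : ℕ) : Set α := ⋂ t ≥ T, u t ⁻¹' W
  have hE (T : ℕ) : IsClosed (E T) := isClosed_biInter fun t _ => hW.preimage (hu t)
  obtain ⟨G, hG, hGδ, hGd⟩ := mem_residual.1 h
  have hGE : G ⊆ ⋃ T, E T := fun x hx => by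
    simpa [E, eventually_atTop] using hG hx
  filter_upwards [residual_of_dense_open (isOpen_iUnion fun T => isOpen_interior)
    (hGδ.dense_iUnion_interior_of_closed hGd hE hGE)] with x hx
  obtain ⟨T, hT⟩ := mem_iUnion.1 hx
  refine ⟨T, ?_⟩
  filter_upwards [mem_interior_iff_mem_nhds.1 hT] with y hy
  exact fun t ht => mem_iInter₂.1 hy t ht

theorem eventually_residual_synchronized [TopologicalSpace α] [BaireSpace α] {f : α → α}
    (hf : Continuous f) {p : α → β} (hp : IsLocallyConstant p) {φ : β → β}
    (h : ∀ᶠ x in residual α, ∀ᶠ t in atTop, p (f (f^[t] x)) = φ (p (f^[t] x))) :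
    ∀ᶠ x in residual α, ∃ T, ∀ᶠ y in 𝓝 x, ∀ t ≥ T, p (f^[t] y) = p (f^[t] x) := by
  have hW : IsClosed {x | p (f x) = φ (p x)} := by
    have hpair : IsLocallyConstant fun x => (p (f x), p x) := (hp.comp_continuous hf).prodMk hp
    exact ⟨hpair {q | ¬ q.1 = φ q.2}⟩
  filter_upwards [eventually_residual_eventually_nhds_forall_ge
    (fun t => hf.iterate t) hW h] with x ⟨T, hT⟩
  have hx := hT.self_of_nhds
  refine ⟨T, ?_⟩
  filter_upwards [hT, ((hp.comp_continuous (hf.iterate T)).isOpen_fiber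
    (p (f^[T] x))).mem_nhds rfl] with y hy hyT t ht
  induction t, ht using Nat.le_induction with
  | base => exact hyT
  | succ t ht ih =>
    rw [iterate_succ_apply', iterate_succ_apply']
    exact (hy t ht).trans ((congrArg φ ih).trans (hx t ht).symm)

end Topology

/-- The translation action of `ℤ` on configurations: `translate k` is the power `σ^k` of the left
shift, for negative `k` as well. -/
def translate (k : ℤ) (x : ℤ → A) : ℤ → A := fun i => x (i + k)

theorem translate_zero (x : ℤ → A) : translate 0 x = x :=
  funext fun i => congrArg x (add_zero i)

theorem translate_translate (k l : ℤ) (x : ℤ → A) :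
    translate k (translate l x) = translate (k + l) x :=
  funext fun i => congrArg x (add_assoc i k l)

theorem shift_eq_translate : (shift : (ℤ → A) → ℤ → A) = translate 1 := rfl

theorem shift_iterate (k : ℕ) (x : ℤ → A) : shift^[k] x = translate k x := by
  induction k with
  | zero => exact (translate_zero x).symm
  | succ k ih =>
    rw [iterate_succ_apply', ih, shift_eq_translate, translate_translate, add_comm, Nat.cast_succ]

theorem shift_image_eq_iff {S : Set (ℤ → A)} :
    shift '' S = S ↔ ∀ k : ℤ, MapsTo (translate k) S S := by
  refine ⟨fun h k x hx => ?_, fun h => (mapsTo_iff_image_subset.1 (h 1)).antisymm fun x hx => ?_⟩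
  · induction k with
    | zero => rwa [translate_zero]
    | succ k ih =>
      rw [add_comm, ← translate_translate]
      exact h.subset (mem_image_of_mem shift ih)
    | pred k ih =>
      obtain ⟨y, hy, hyx⟩ := h.superset ih
      rwa [show -(k : ℤ) - 1 = -1 + -k by ring, ← translate_translate, ← hyx, shift_eq_translate,
        translate_translate, neg_add_cancel, translate_zero]
  · exact ⟨translate (-1) x, h (-1) hx, (translate_translate 1 (-1) x).trans (translate_zero x)⟩

theorem continuous_translate [TopologicalSpace A] (k : ℤ) :
    Continuous (translate k : (ℤ → A) → ℤ → A) :=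
  continuous_pi fun i => continuous_apply (i + k)

open scoped Topology in
theorem exists_mem_translate_mem [TopologicalSpace A] [DiscreteTopology A] {U : Set (ℤ → A)}
    {z : ℤ → A} (hU : U ∈ 𝓝 z) : ∃ K : ℕ, ∀ k ≥ K, ∃ x ∈ U, translate k x ∈ U := by
  classical
  obtain ⟨I, hI⟩ := mem_nhds_pi_iff_of_discrete.1 hU
  let m := I.sup Int.natAbs
  have hm {i : ℤ} (hi : i ∈ I) : i.natAbs ≤ m := Finset.le_sup hi
  refine ⟨2 * m + 1, fun k hk => ⟨fun i => if i ≤ m then z i else z (i - k), ?_, ?_⟩⟩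
  · refine hI fun i hi => if_pos ?_
    have := hm hi
    omega
  · refine hI fun i hi => ?_
    have := hm hi
    rw [translate, if_neg (by omega), add_sub_cancel_right]

theorem isSubshift_closure [TopologicalSpace A] {S : Set (ℤ → A)} (h : shift '' S = S) :
    IsSubshift (closure S) :=
  ⟨isClosed_closure, shift_image_eq_iff.2 fun k =>
    (shift_image_eq_iff.1 h k).closure (continuous_translate k)⟩

theorem length_word (x : ℤ → A) (i : ℤ) (n : ℕ) : (word x i n).length = n := by
  simp [word]

theorem word_eq_word_iff {x y : ℤ → A} {i j : ℤ} {n : ℕ} :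
    word x i n = word y j n ↔ ∀ k < n, x (i + k) = y (j + k) := by
  rw [word, word, List.map_inj_left]
  aesop

theorem word_translate (k : ℤ) (x : ℤ → A) (i : ℤ) (n : ℕ) :
    word (translate k x) i n = word x (i + k) n :=
  word_eq_word_iff.2 fun j _ => congrArg x (add_right_comm i j k)

theorem isLocallyConstant_word [TopologicalSpace A] [DiscreteTopology A] (i : ℤ) (n : ℕ) :
    IsLocallyConstant fun x : ℤ → A => word x i n := by
  refine IsLocallyConstant.iff_eventually_eq _ |>.2 fun x =>
    mem_nhds_pi_iff_of_discrete.2 ⟨(Finset.range n).image fun k : ℕ => i + k, fun y hy => ?_⟩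
  exact word_eq_word_iff.2 fun k hk => hy _ (Finset.mem_image_of_mem _ (Finset.mem_range.2 hk))

theorem lang_closure [TopologicalSpace A] [DiscreteTopology A] (S : Set (ℤ → A)) :
    lang (closure S) = lang S := by
  refine Subset.antisymm ?_ fun w ⟨x, hx, h⟩ => ⟨x, subset_closure hx, h⟩
  rintro w ⟨x, hx, i, hi⟩
  obtain ⟨y, hy, hyS⟩ := mem_closure_iff.1 hx _
    ((isLocallyConstant_word i w.length).isOpen_fiber w) hi
  exact ⟨y, hyS, i, hy⟩

theorem mem_lang_iff {S : Set (ℤ → A)} (hS : shift '' S = S) {w : List A} :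
    w ∈ lang S ↔ ∃ x ∈ S, word x 0 w.length = w := by
  refine ⟨fun ⟨x, hx, i, hi⟩ => ⟨translate i x, shift_image_eq_iff.1 hS i hx, ?_⟩,
    fun ⟨x, hx, h⟩ => ⟨x, hx, 0, h⟩⟩
  rwa [word_translate, zero_add]

theorem chainRel_mono {S T : Set (ℤ → A)} (h : S ⊆ T) {u v : List A} (huv : chainRel S u v) :
    chainRel T u v :=
  ⟨huv.1, huv.2.imp fun _ hx => ⟨h hx.1, hx.2⟩⟩

theorem ChainTransPM.closure [TopologicalSpace A] [DiscreteTopology A] {S : Set (ℤ → A)}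
    (hS : ChainTransPM S) : ChainTransPM (closure S) := by
  simp only [ChainTransPM, lang_closure]
  exact fun u hu v hv huv => (hS u hu v hv huv).mono fun _ _ => chainRel_mono subset_closure

theorem ChainTransPM.sUnion {c : Set (Set (ℤ → A))} (hc : IsChain (· ⊆ ·) c)
    (h : ∀ S ∈ c, ChainTransPM S) : ChainTransPM (⋃₀ c) := by
  rintro u ⟨x, ⟨S, hS, hx⟩, hu⟩ v ⟨y, ⟨T, hT, hy⟩, hv⟩ huv
  obtain ⟨R, hR, hSR, hTR⟩ : ∃ R ∈ c, S ⊆ R ∧ T ⊆ R := hc.directedOn S hS T hT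
  exact (h R hR u ⟨x, hSR hx, hu⟩ v ⟨y, hTR hy, hv⟩ huv).mono
    fun _ _ => chainRel_mono (subset_sUnion_of_mem hR)

theorem shift_image_range_translate (x : ℤ → A) :
    shift '' range (translate · x) = range (translate · x) := by
  refine shift_image_eq_iff.2 fun k => ?_
  rintro _ ⟨l, rfl⟩
  exact ⟨k + l, (translate_translate k l x).symm⟩

theorem chainTransPM_range_translate (x : ℤ → A) : ChainTransPM (range (translate · x)) := by
  have chainRel_of_le {u v : List A} {i j : ℤ} (huv : u.length = v.length) (hij : i ≤ j)
      (hu : word (translate i x) 0 u.length = u) (hv : word (translate j x) 0 v.length = v) :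
      chainRel (range (translate · x)) u v := by
    refine ⟨huv, translate i x, mem_range_self i, (j - i).toNat, hu, ?_⟩
    rw [word_translate, zero_add] at hv
    rw [huv, word_translate, Int.toNat_of_nonneg (sub_nonneg.2 hij), sub_add_cancel, hv]
  intro u hu v hv huv
  obtain ⟨_, ⟨i, rfl⟩, hi⟩ := (mem_lang_iff (shift_image_range_translate x)).1 hu
  obtain ⟨_, ⟨j, rfl⟩, hj⟩ := (mem_lang_iff (shift_image_range_translate x)).1 hv
  rcases le_total i j with hij | hji
  · exact .rel _ _ (chainRel_of_le huv hij hi hj)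
  · exact .symm _ _ (.rel _ _ (chainRel_of_le huv.symm hji hj hi))

theorem exists_isChainComponent_superset [TopologicalSpace A] [DiscreteTopology A]
    {X S : Set (ℤ → A)} (hX : IsClosed X) (hS : IsSubshift S) (hSX : S ⊆ X)
    (hSc : ChainTransPM S) : ∃ Z, IsChainComponent X Z ∧ S ⊆ Z := by
  let P : Set (Set (ℤ → A)) := {Z | IsSubshift Z ∧ Z ⊆ X ∧ ChainTransPM Z}
  have hub : ∀ c ⊆ P, IsChain (· ⊆ ·) c → c.Nonempty → ∃ ub ∈ P, ∀ Z ∈ c, Z ⊆ ub := by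
    intro c hc hchain _
    have hinv : shift '' ⋃₀ c = ⋃₀ c := by
      rw [image_sUnion]
      exact congrArg sUnion ((image_congr fun Z hZ => (hc hZ).1.2).trans (image_id' c))
    exact ⟨closure (⋃₀ c), ⟨isSubshift_closure hinv,
      closure_minimal (sUnion_subset fun Z hZ => (hc hZ).2.1) hX,
      (ChainTransPM.sUnion hchain fun Z hZ => (hc hZ).2.2).closure⟩,
      fun Z hZ => (subset_sUnion_of_mem hZ).trans subset_closure⟩
  obtain ⟨Z, hSZ, hZ⟩ := zorn_subset_nonempty P hub S ⟨hS, hSX, hSc⟩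
  obtain ⟨hZs, hZX, hZc⟩ := hZ.prop
  exact ⟨Z, ⟨hZs, hZX, hZc, fun W hW hWX hWc hZW => (hZ.eq_of_subset ⟨hW, hWX, hWc⟩ hZW).symm⟩,
    hSZ⟩

theorem IsSubshift.exists_isChainComponent_mem [TopologicalSpace A] [DiscreteTopology A]
    {X : Set (ℤ → A)} (hX : IsSubshift X) {x : ℤ → A} (hx : x ∈ X) :
    ∃ Z, IsChainComponent X Z ∧ x ∈ Z := by
  have horbit : range (translate · x) ⊆ X :=
    range_subset_iff.2 fun k => shift_image_eq_iff.1 hX.2 k hx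
  obtain ⟨Z, hZ, hxZ⟩ := exists_isChainComponent_superset hX.1
    (isSubshift_closure (shift_image_range_translate x)) (closure_minimal horbit hX.1)
    (chainTransPM_range_translate x).closure
  exact ⟨Z, hZ, hxZ (subset_closure ⟨0, translate_zero x⟩)⟩

section Invariant

variable {Z : Set (ℤ → A)} {F : Type*} {p : (ℤ → A) → F}

theorem apply_translate_eq_iterate {g : F → F} (hZ : shift '' Z = Z)
    (hpg : ∀ x ∈ Z, p (shift x) = g (p x)) (k : ℕ) {x : ℤ → A} (hx : x ∈ Z) :
    p (translate k x) = g^[k] (p x) := by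
  induction k with
  | zero => exact congrArg p (translate_zero x)
  | succ k ih =>
    rw [iterate_succ_apply', ← ih, ← hpg _ (shift_image_eq_iff.1 hZ k hx), shift_eq_translate,
      translate_translate, Nat.cast_succ, add_comm]

theorem apply_translate_eq (hZ : shift '' Z = Z) (hpZ : ∀ x ∈ Z, p (shift x) = p x) (k : ℕ)
    {x : ℤ → A} (hx : x ∈ Z) : p (translate k x) = p x :=
  (apply_translate_eq_iterate (g := id) hZ hpZ k hx).trans (congrFun (iterate_id k) (p x))

theorem exists_word_determines [Finite A] [TopologicalSpace A] [DiscreteTopology A]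
    (hp : IsLocallyConstant p) (hZ : shift '' Z = Z) (hpZ : ∀ x ∈ Z, p (shift x) = p x) :
    ∃ N, ∀ x ∈ Z, ∀ y ∈ Z, word x 0 N = word y 0 N → p x = p y := by
  obtain ⟨I, hI⟩ := exists_finset_dependsOn_of_isLocallyConstant hp
  obtain ⟨n, hn⟩ : ∃ n : ℕ, ∀ i ∈ I, i.natAbs < n :=
    ⟨I.sup Int.natAbs + 1, fun i hi => Nat.lt_succ_of_le (Finset.le_sup hi)⟩
  refine ⟨2 * n, fun x hx y hy hxy => ?_⟩
  rw [← apply_translate_eq hZ hpZ n hx, ← apply_translate_eq hZ hpZ n hy]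
  refine hI fun i hi => ?_
  have hin := hn i hi
  have hcoord := word_eq_word_iff.1 hxy (i + n).toNat (by omega)
  rwa [zero_add, Int.toNat_of_nonneg (by omega)] at hcoord

theorem ChainTransPM.eq_of_word_determines (hZc : ChainTransPM Z) (hZ : shift '' Z = Z)
    (hpZ : ∀ x ∈ Z, p (shift x) = p x) {N : ℕ}
    (hN : ∀ x ∈ Z, ∀ y ∈ Z, word x 0 N = word y 0 N → p x = p y)
    {x y : ℤ → A} (hx : x ∈ Z) (hy : y ∈ Z) : p x = p y := by
  let S (u : List A) : Prop := ∃ z ∈ Z, word z 0 N = u ∧ p z = p x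
  have hS {u v : List A} (huv : Relation.EqvGen (chainRel Z) u v) : S u ↔ S v := by
    induction huv with
    | rel u v huv =>
      obtain ⟨hlen, w, hw, k, hu, hv⟩ := huv
      have hwk : translate k w ∈ Z := shift_image_eq_iff.1 hZ k hw
      have hpwk : p (translate k w) = p w := apply_translate_eq hZ hpZ k hw
      have hv' : word (translate k w) 0 u.length = v := by rw [word_translate, zero_add, hv]
      constructor
      · rintro ⟨z, hz, rfl, hzx⟩
        rw [length_word] at hu hv'
        exact ⟨translate k w, hwk, hv', by rw [hpwk, hN w hw z hz hu, hzx]⟩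
      · rintro ⟨z, hz, rfl, hzx⟩
        rw [hlen, length_word] at hu hv'
        exact ⟨w, hw, hu, by rw [← hpwk, hN _ hwk z hz hv', hzx]⟩
    | refl u => exact Iff.rfl
    | symm u v _ ih => exact ih.symm
    | trans u v w _ _ ihuv ihvw => exact ihuv.trans ihvw
  have word_mem_lang {z : ℤ → A} (hz : z ∈ Z) : word z 0 N ∈ lang Z :=
    ⟨z, hz, 0, by rw [length_word]⟩
  obtain ⟨z, hz, hzy, hzx⟩ :=
    (hS (hZc _ (word_mem_lang hx) _ (word_mem_lang hy) (by simp only [length_word]))).1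
      ⟨x, hx, rfl, rfl⟩
  exact hzx.symm.trans (hN z hz y hy hzy)

theorem ChainTransPM.eq_of_shift_invariant [Finite A] [TopologicalSpace A] [DiscreteTopology A]
    (hZc : ChainTransPM Z) (hZ : shift '' Z = Z) (hp : IsLocallyConstant p)
    (hpZ : ∀ x ∈ Z, p (shift x) = p x) {x y : ℤ → A} (hx : x ∈ Z) (hy : y ∈ Z) : p x = p y :=
  let ⟨_, hN⟩ := exists_word_determines hp hZ hpZ
  hZc.eq_of_word_determines hZ hpZ hN hx hy

end Invariant

section Equivariant

variable [Finite A] [TopologicalSpace A] [DiscreteTopology A] {ι Y G : Type*}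
  [TopologicalSpace Y] [DiscreteTopology Y] [Group G] [Finite G] [MulAction G Y]
  {s : (ℤ → A) → ι → Y} {e : G}

theorem ChainTransPM.mem_orbit_of_equivariant {Z : Set (ℤ → A)} (hZc : ChainTransPM Z)
    (hZ : shift '' Z = Z) (hs : Continuous s) (hse : ∀ x ∈ Z, s (shift x) = e • s x)
    {x y : ℤ → A} (hx : x ∈ Z) (hy : y ∈ Z) : s x ∈ MulAction.orbit G (s y) := by
  by_contra hxy
  have hne (γ : G) : ∃ t, γ • s y t ≠ s x t := by
    by_contra! h
    exact hxy ⟨γ, funext h⟩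
  -- One witness per element of the finite group `G`: finitely many coordinates of `s` suffice.
  choose τ hτ using hne
  let q (z : ℤ → A) : G → Y := fun γ => s z (τ γ)
  have hq : IsLocallyConstant q := (IsLocallyConstant.iff_continuous q).2 <|
    continuous_pi fun γ => (continuous_apply (τ γ)).comp hs
  have hqe : ∀ z ∈ Z, q (shift z) = e • q z := fun z hz => funext fun γ => congrFun (hse z hz) (τ γ)
  have horbit : MulAction.orbit G (q x) = MulAction.orbit G (q y) :=
    hZc.eq_of_shift_invariant hZ (hq.comp (MulAction.orbit G))
      (fun z hz => by rw [comp_apply, hqe z hz, MulAction.orbit_smul, comp_apply]) hx hy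
  obtain ⟨γ, hγ⟩ := MulAction.orbit_eq_iff.1 horbit
  exact hτ γ (congrFun hγ γ)

theorem IsSubshift.finite_image_of_equivariant {X : Set (ℤ → A)} (hX : IsSubshift X)
    (hfin : {Z | IsChainComponent X Z}.Finite) (hs : Continuous s)
    (hse : ∀ x ∈ X, s (shift x) = e • s x) : (s '' X).Finite := by
  have hcover : s '' X ⊆ ⋃ Z ∈ {Z | IsChainComponent X Z}, s '' Z := by
    rintro _ ⟨x, hx, rfl⟩
    obtain ⟨Z, hZ, hxZ⟩ := hX.exists_isChainComponent_mem hx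
    exact mem_biUnion hZ (mem_image_of_mem s hxZ)
  refine (hfin.biUnion fun Z ⟨hZ, hZX, hZc, _⟩ => ?_).subset hcover
  rcases Z.eq_empty_or_nonempty with rfl | ⟨y, hy⟩
  · exact image_empty s ▸ finite_empty
  · refine (finite_range fun γ : G => γ • s y).subset (image_subset_iff.2 fun x hx => ?_)
    exact hZc.mem_orbit_of_equivariant hZ.2 hs (fun z hz => hse z (hZX hz)) hx hy

end Equivariant

section GenericLimitSet

variable [TopologicalSpace A] {f : (ℤ → A) → (ℤ → A)}

theorem realm_genLimitSet_mem_residual [SecondCountableTopology (ℤ → A)]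
    (f : (ℤ → A) → (ℤ → A)) : realm f (genLimitSet f) ∈ residual (ℤ → A) := by
  obtain ⟨T, hTc, hT, hTU⟩ := TopologicalSpace.isOpen_sUnion_countable
    (compl '' {C | IsClosed C ∧ realm f C ∈ residual (ℤ → A)})
    (by rintro _ ⟨C, hC, rfl⟩; exact hC.1.isOpen_compl)
  have hrealm : ∀ U ∈ T, ∀ᶠ x in residual (ℤ → A), x ∈ realm f Uᶜ := by
    intro U hU
    obtain ⟨C, hC, rfl⟩ := hT hU
    exact (compl_compl C).symm ▸ hC.2
  have hgen : genLimitSet f = (⋃₀ T)ᶜ := by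
    rw [hTU, ← compl_sInter, compl_compl, genLimitSet]
  filter_upwards [(eventually_countable_ball hTc).2 hrealm] with x hx y hy
  rw [hgen]
  exact fun ⟨U, hU, hyU⟩ => hx U hU hy hyU

theorem eventually_iterate_mem_of_mem_realm [CompactSpace A] {X W : Set (ℤ → A)} (hW : IsOpen W)
    (hXW : X ⊆ W) {x : ℤ → A} (hx : x ∈ realm f X) : ∀ᶠ t in atTop, f^[t] x ∈ W := by
  by_contra h
  obtain ⟨y, hyW, hy⟩ := hW.isClosed_compl.isCompact.exists_mapClusterPt_of_frequently
    (not_eventually.1 h)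
  exact hyW (hXW (hx hy))

theorem eventually_residual_eventually_iterate_mem [CompactSpace A]
    [SecondCountableTopology (ℤ → A)] {W : Set (ℤ → A)} (hW : IsOpen W) (h : genLimitSet f ⊆ W) :
    ∀ᶠ x in residual (ℤ → A), ∀ᶠ t in atTop, f^[t] x ∈ W :=
  mem_of_superset (realm_genLimitSet_mem_residual f) fun _ hx =>
    eventually_iterate_mem_of_mem_realm hW h hx

theorem genLimitSet_subset_of_eventually {C : Set (ℤ → A)} (hC : IsClosed C)
    (h : ∀ᶠ x in residual (ℤ → A), ∀ᶠ t in atTop, f^[t] x ∈ C) : genLimitSet f ⊆ C :=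
  sInter_subset_of_mem ⟨hC, mem_of_superset h fun _ hx _ hy => hC.mem_of_mapClusterPt hy hx⟩

theorem apply_mem_omegaSet (hf : Continuous f) {x y : ℤ → A} (hy : y ∈ omegaSet f x) :
    f y ∈ omegaSet f x := by
  have hfy : MapClusterPt (f y) atTop (f ∘ fun t => f^[t] x) :=
    MapClusterPt.continuousAt_comp hf.continuousAt hy
  have hsucc : (f ∘ fun t => f^[t] x) = (fun t => f^[t] x) ∘ (· + 1) :=
    funext fun t => (iterate_succ_apply' f t x).symm
  rw [hsucc] at hfy
  exact hfy.of_comp (tendsto_add_atTop_nat 1)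

theorem mapsTo_genLimitSet (hf : Continuous f) : MapsTo f (genLimitSet f) (genLimitSet f) :=
  fun _ hx C hC => hx (f ⁻¹' C)
    ⟨hC.1.preimage hf, mem_of_superset hC.2 fun _ hz _ hy => hz (apply_mem_omegaSet hf hy)⟩

theorem IsCA.iterate_translate (hf : IsCA f) (t k : ℕ) (x : ℤ → A) :
    f^[t] (translate k x) = translate k (f^[t] x) := by
  have hcomm : Function.Commute f shift := congrFun hf.2
  rw [← shift_iterate, ← shift_iterate]
  exact hcomm.iterate_iterate t k x

variable [Finite A] [DiscreteTopology A] {F : Type*} {p : (ℤ → A) → F} {g φ : F → F}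

theorem IsCA.eventually_residual_apply_translate (hf : IsCA f) (hp : IsLocallyConstant p)
    (hinv : shift '' genLimitSet f = genLimitSet f)
    (hpg : ∀ x ∈ genLimitSet f, p (shift x) = g (p x)) (k : ℕ) :
    ∀ᶠ x in residual (ℤ → A),
      ∀ᶠ t in atTop, p (f^[t] (translate k x)) = g^[k] (p (f^[t] x)) := by
  have hpair : IsLocallyConstant fun x => (p (translate k x), p x) :=
    (hp.comp_continuous (continuous_translate k)).prodMk hp
  filter_upwards [eventually_residual_eventually_iterate_mem (hpair {q | q.1 = g^[k] q.2})
    fun x hx => apply_translate_eq_iterate hinv hpg k hx] with x hx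
  filter_upwards [hx] with t ht
  rw [hf.iterate_translate]
  exact ht

theorem IsCA.apply_eq_of_semiconj (hf : IsCA f)
    (hinv : shift '' genLimitSet f = genLimitSet f) (hp : IsLocallyConstant p)
    (hpg : ∀ x ∈ genLimitSet f, p (shift x) = g (p x))
    (hpf : ∀ x ∈ genLimitSet f, p (f x) = φ (p x)) :
    ∀ x ∈ genLimitSet f, g (p x) = p x := by
  have hW : IsOpen {x | p (f x) = φ (p x)} :=
    ((hp.comp_continuous hf.1).prodMk hp) {q | q.1 = φ q.2}
  have hsync := eventually_residual_synchronized hf.1 hp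
    (eventually_residual_eventually_iterate_mem hW hpf)
  refine genLimitSet_subset_of_eventually ⟨hp {q | ¬ g q = q}⟩ ?_
  filter_upwards [hsync] with z ⟨T, hT⟩
  -- `σ` mixes the neighbourhood on which the orbits synchronise with that of `z`, so `g^K` and
  -- `g^(K+1)` both fix the eventual values of `p` along that orbit, and hence so does `g`.
  obtain ⟨K, hK⟩ := exists_mem_translate_mem (interior_mem_nhds.2 hT)
  have hper (k : ℕ) (hk : K ≤ k) : ∀ᶠ t in atTop, g^[k] (p (f^[t] z)) = p (f^[t] z) := by
    let V := interior {y | ∀ t ≥ T, p (f^[t] y) = p (f^[t] z)}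
    obtain ⟨y, ⟨hyV, hykV⟩, hy⟩ := (dense_of_mem_residual
      (hf.eventually_residual_apply_translate hp hinv hpg k)).inter_open_nonempty
      (V ∩ translate k ⁻¹' V)
      (isOpen_interior.inter (isOpen_interior.preimage (continuous_translate k))) (hK k hk)
    filter_upwards [hy, eventually_ge_atTop T] with t hyt ht
    rw [interior_subset hyV t ht, interior_subset hykV t ht] at hyt
    exact hyt.symm
  filter_upwards [hper K le_rfl, hper (K + 1) K.le_succ] with t hKt hKt'
  rwa [iterate_succ_apply', hKt] at hKt'

end GenericLimitSet

section Itinerary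

variable {α β : Type*}

/-- The itinerary of `x` under `f` with respect to `P`: the sequence of values of `P` observed along
the forward orbit of `x`. -/
def itinerary (f : α → α) (P : α → β) (x : α) : ℕ → β := fun t => P (f^[t] x)

theorem itinerary_apply (f : α → α) (P : α → β) (x : α) :
    itinerary f P (f x) = fun t => itinerary f P x (t + 1) := rfl

theorem continuous_itinerary [TopologicalSpace α] [TopologicalSpace β] {f : α → α}
    (hf : Continuous f) {P : α → β} (hP : Continuous P) : Continuous (itinerary f P) :=
  continuous_pi fun t => hP.comp (hf.iterate t)

theorem IsCA.itinerary_shift [TopologicalSpace A] {f : (ℤ → A) → (ℤ → A)} (hf : IsCA f)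
    {S : Set (ℤ → A)} (hfS : MapsTo f S S) {Y G : Type*} [SMul G Y] {P : (ℤ → A) → Y} {e : G}
    (hPe : ∀ x ∈ S, P (shift x) = e • P x) {x : ℤ → A} (hx : x ∈ S) :
    itinerary f P (shift x) = e • itinerary f P x :=
  funext fun t =>
    (congrArg P (hf.iterate_translate t 1 x)).trans (hPe _ (hfS.iterate t hx))

end Itinerary

theorem IsCA.smul_eq_of_equivariant [Finite A] [TopologicalSpace A] [DiscreteTopology A]
    {f : (ℤ → A) → (ℤ → A)} (hf : IsCA f) (hX : IsSubshift (genLimitSet f))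
    (hfin : {Z | IsChainComponent (genLimitSet f) Z}.Finite) {Y G : Type*} [TopologicalSpace Y]
    [DiscreteTopology Y] [Group G] [Finite G] [MulAction G Y] {P : (ℤ → A) → Y}
    (hP : Continuous P) {e : G} (hPe : ∀ x ∈ genLimitSet f, P (shift x) = e • P x) :
    ∀ x ∈ genLimitSet f, e • P x = P x := by
  intro x hx
  let s : (ℤ → A) → ℕ → Y := itinerary f P
  have hs : Continuous s := continuous_itinerary hf.1 hP
  have hfX : MapsTo f (genLimitSet f) (genLimitSet f) := mapsTo_genLimitSet hf.1
  have hse : ∀ z ∈ genLimitSet f, s (shift z) = e • s z := fun z => hf.itinerary_shift hfX hPe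
  have hs_fin : (range fun z : genLimitSet f => s z).Finite :=
    image_eq_range s _ ▸ hX.finite_image_of_equivariant hfin hs hse
  have : Nonempty (ℕ → Y) := ⟨s x⟩
  obtain ⟨p, hp, hps⟩ :=
    exists_isLocallyConstant_extension hX.1 (hs.comp continuous_subtype_val) hs_fin
  replace hps : ∀ z ∈ genLimitSet f, p z = s z := fun z hz => hps ⟨z, hz⟩
  have hfix : e • p x = p x := hf.apply_eq_of_semiconj (φ := fun c t => c (t + 1)) hX.2 hp
    (fun z hz => by rw [hps _ (hX.2.subset (mem_image_of_mem shift hz)), hps z hz, hse z hz])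
    (fun z hz => by rw [hps _ (hfX hz), hps z hz]; exact itinerary_apply f P z) x hx
  rw [hps x hx] at hfix
  exact congrFun hfix 0

theorem shiftRes_surjective {X : Set (ℤ → A)} (h : shift '' X = X) : Surjective (shiftRes X h) := by
  rintro ⟨x, hx⟩
  obtain ⟨y, hy, rfl⟩ := h.superset hx
  exact ⟨⟨y, hy⟩, rfl⟩

/-- a subshift with finitely many `σ±`-chain components admitting a finite
factor with nontrivial dynamics (a finite set `Y`, a map `g ≠ id` on `Y` and a continuous
surjection `π : X → Y` with `π ∘ σ = g ∘ π`) is not the generic limit set of any CA. -/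
theorem stmt18 [Fintype A] [Nonempty A] [TopologicalSpace A] [DiscreteTopology A]
    (X : Set (ℤ → A)) (hX : IsSubshift X)
    (hfin : {Y : Set (ℤ → A) | IsChainComponent X Y}.Finite)
    (hfactor : ∃ (Y : Type) (_ : Fintype Y) (g : Y → Y) (π : X → Y),
      g ≠ id ∧ (@Continuous _ _ _ ⊥ π) ∧ Function.Surjective π ∧
        ∀ x : X, π (shiftRes X hX.2 x) = g (π x)) :
    ∀ f : (ℤ → A) → (ℤ → A), IsCA f → genLimitSet f ≠ X := by
  rintro f hf rfl
  obtain ⟨Y, _, g, π, hg, hπc, hπs, hπ⟩ := hfactor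
  let _ : TopologicalSpace Y := ⊥
  have : DiscreteTopology Y := ⟨rfl⟩
  have : Nonempty Y := (ne_iff.1 hg).nonempty
  have hsemiconj : π ∘ shiftRes _ hX.2 = g ∘ π := funext hπ
  have hgs : Surjective g :=
    .of_comp (hsemiconj ▸ hπs.comp (shiftRes_surjective hX.2))
  let e : Equiv.Perm Y := Equiv.ofBijective g hgs.bijective_of_finite
  obtain ⟨P, hP, hPπ⟩ := exists_isLocallyConstant_extension hX.1 hπc (toFinite _)
  have hPe : ∀ x ∈ genLimitSet f, P (shift x) = e • P x := fun x hx =>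
    (hPπ (shiftRes _ hX.2 ⟨x, hx⟩)).trans ((hπ _).trans (congrArg g (hPπ ⟨x, hx⟩).symm))
  refine hg (funext fun y => ?_)
  obtain ⟨x, rfl⟩ := hπs y
  have hfix : e • P x = P x := hf.smul_eq_of_equivariant hX hfin hP.continuous hPe x x.2
  rwa [hPπ x] at hfix

end Gls
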